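/- (Data Localisation) Let H_{A1}, H_{A2}, H_B be finite-dimensional complex Hilbert spaces and set H_A = H_{A1} ⊗ H_{A2}. Fix unit vectors φ ∈ H_{A2} and γ ∈ H_B, and let U be a unitary operator on H_A ⊗ H_B. Suppose there exists a density operator ρ_B on H_B such that for every unit vector ψ ∈ H_{A1}, Tr_A[U(|ψ⟩⟨ψ| ⊗ |φ⟩⟨φ| ⊗ |γ⟩⟨γ|)U†] = ρ_B. Then there exist a unitary operator V on H_A = H_{A1} ⊗ H_{A2} and a density operator σ on H_{A2}, both independent of ψ, such that for every unit vector ψ ∈ H_{A1}, Tr_B[U(|ψ⟩⟨ψ| ⊗ |φ⟩⟨φ| ⊗ |γ⟩⟨γ|)U†] = V(|ψ⟩⟨ψ| ⊗ σ)V†. -/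

import Mathlib

open Matrix
open Kronecker
open scoped ComplexOrder

noncomputable section

/-- The rank-one projection `|x⟩⟨x|` onto a (unit) vector `x`. -/
def outer {n : Type*} (x : n → ℂ) : Matrix n n ℂ :=
  Matrix.of fun i j => x i * star (x j)

/-- Partial trace over the first tensor factor of an operator on `H_A ⊗ H_B`. -/
def trFst {A B : Type*} [Fintype A] (M : Matrix (A × B) (A × B) ℂ) : Matrix B B ℂ :=
  Matrix.of fun b b' => ∑ a, M (a, b) (a, b')

/-- Partial trace over the second tensor factor of an operator on `H_A ⊗ H_B`. -/
def trSnd {A B : Type*} [Fintype B] (M : Matrix (A × B) (A × B) ℂ) : Matrix A A ℂ :=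
  Matrix.of fun a a' => ∑ b, M (a, b) (a', b)

/-- A density operator: positive semidefinite with unit trace. -/
def IsDensity {n : Type*} [Fintype n] (M : Matrix n n ℂ) : Prop :=
  M.PosSemidef ∧ M.trace = 1

/-- The product vector `ψ ⊗ φ ⊗ γ` on `H_{A1} ⊗ H_{A2} ⊗ H_B`. -/
def tens3 {A1 A2 B : Type*} (ψ : A1 → ℂ) (φ : A2 → ℂ) (γ : B → ℂ) :
    ((A1 × A2) × B) → ℂ := fun q => ψ q.1.1 * φ q.1.2 * γ q.2

lemma core_loc {A1 A2 K : Type*} [Fintype A1] [Fintype A2] [Fintype K]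
    [DecidableEq A1] [DecidableEq A2] [DecidableEq K] [Nonempty A1]
    (p : K → ℝ) (hp : ∀ k, 0 ≤ p k) (hp1 : ∑ k, p k = 1)
    (Y : K → (A1 × A2) → A1 → ℂ)
    (hY : ∀ k l i i', ∑ a, Y k a i * star (Y l a i') =
      if k = l ∧ i = i' then (p k : ℂ) else 0) :
    ∃ V : Matrix (A1 × A2) (A1 × A2) ℂ, V ∈ Matrix.unitaryGroup (A1 × A2) ℂ ∧
      ∃ σ : Matrix A2 A2 ℂ, IsDensity σ ∧
        ∀ (ψ : A1 → ℂ) a a',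
          ∑ k, (∑ i, Y k a i * ψ i) * star (∑ i, Y k a' i * ψ i)
            = (V * (outer ψ ⊗ₖ σ) * Vᴴ) a a' := by
  classical
  let S := {k : K // p k ≠ 0}
  have hzero : ∀ k, p k = 0 → ∀ a i, Y k a i = 0 := by
    intro k hk a i
    have h := hY k k i i
    simp only [and_self, if_true, hk, Complex.ofReal_zero] at h
    have h2 : ∑ a, Complex.normSq (Y k a i) = 0 := by
      have : ((∑ a, Complex.normSq (Y k a i) : ℝ) : ℂ) = 0 := by
        rw [← h]; push_cast
        exact Finset.sum_congr rfl fun a _ => (Complex.mul_conj _).symm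
      exact_mod_cast this
    have h3 := (Finset.sum_eq_zero_iff_of_nonneg (fun a _ => Complex.normSq_nonneg _)).1 h2 a
      (Finset.mem_univ _)
    exact Complex.normSq_eq_zero.1 h3
  have hsub : ∀ {M : Type} [AddCommMonoid M] (F : K → M), (∀ k, p k = 0 → F k = 0) →
      ∑ k : S, F k = ∑ k, F k := by
    intro M _ F hF
    rw [← Fintype.sum_subtype_add_sum_subtype (fun k => p k ≠ 0) F]
    rw [Finset.sum_eq_zero (s := (Finset.univ : Finset {k // ¬ p k ≠ 0}))
      (fun k _ => hF k (not_not.1 k.2)), add_zero]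
  have hsq : ∀ k : S, ((Real.sqrt (p k) : ℝ) : ℂ) * (Real.sqrt (p k) : ℝ) = (p k : ℂ) := by
    intro k; rw [← Complex.ofReal_mul, Real.mul_self_sqrt (hp k)]
  have hsn : ∀ k : S, ((Real.sqrt (p k) : ℝ) : ℂ) ≠ 0 := by
    intro k h
    have := hsq k
    rw [h] at this
    simp only [mul_zero] at this
    exact k.2 (by exact_mod_cast this.symm)
  let w : A1 × S → EuclideanSpace ℂ (A1 × A2) := fun x =>
    WithLp.toLp 2 fun a => Y x.2 a x.1 / (Real.sqrt (p x.2) : ℝ)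
  have hw : Orthonormal ℂ w := by
    rw [orthonormal_iff_ite]
    rintro ⟨i, k⟩ ⟨i', l⟩
    have h := hY l k i' i
    have e : inner ℂ (w (i, k)) (w (i', l)) =
        (∑ a, Y l a i' * star (Y k a i)) / ((Real.sqrt (p l) : ℝ) * (Real.sqrt (p k) : ℝ)) := by
      simp only [w, PiLp.inner_apply, RCLike.inner_apply, Finset.sum_div]
      refine Finset.sum_congr rfl fun a _ => ?_
      rw [map_div₀, Complex.conj_ofReal, div_mul_div_comm]
      rfl
    rw [e, h]
    by_cases hkl : (l : K) = k
    · have : l = k := Subtype.ext hkl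
      subst this
      by_cases hi : i' = i
      · subst hi
        simp only [and_self, if_true, hsq]
        exact div_self (by exact_mod_cast l.2)
      · simp [hi, Ne.symm hi]
    · have : ¬ (i, k) = (i', l) := by
        intro h; exact hkl (congrArg Subtype.val (Prod.ext_iff.1 h).2.symm)
      simp [hkl, this]
  have hcard : Fintype.card S ≤ Fintype.card A2 := by
    have h := hw.linearIndependent.fintype_card_le_finrank
    rw [finrank_euclideanSpace, Fintype.card_prod, Fintype.card_prod] at h
    exact Nat.le_of_mul_le_mul_left h Fintype.card_pos
  obtain ⟨f⟩ : Nonempty (S ↪ A2) := Function.Embedding.nonempty_of_card_le hcard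
  let v : A1 × A2 → EuclideanSpace ℂ (A1 × A2) := fun x =>
    if h : ∃ k, f k = x.2 then w (x.1, h.choose) else 0
  have hv : ∀ i k, v (i, f k) = w (i, k) := by
    intro i k
    have h : ∃ k', f k' = f k := ⟨k, rfl⟩
    have h2 : h.choose = k := f.injective h.choose_spec
    simp only [v, dif_pos h, h2]
  let s : Set (A1 × A2) := {x | ∃ k, f k = x.2}
  have hvs : Orthonormal ℂ (s.domRestrict v) := by
    let g : s → A1 × S := fun x => (x.1.1, x.2.choose)
    have hg : s.domRestrict v = w ∘ g := by
      funext x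
      have : ∃ k, f k = x.1.2 := x.2
      change v x.1 = _
      simp only [v, dif_pos this, Function.comp, g]
    rw [hg]
    apply hw.comp
    intro x y hxy
    have h1 := (Prod.ext_iff.1 hxy).1
    have h2 := (Prod.ext_iff.1 hxy).2
    simp only [g] at h1 h2
    have hx := x.2.choose_spec
    have hy := y.2.choose_spec
    rw [h2] at hx
    exact Subtype.ext (Prod.ext h1 (hx.symm.trans hy))
  obtain ⟨b, hb⟩ := hvs.exists_orthonormalBasis_extension_of_card_eq
    (finrank_euclideanSpace)
  have hbw : ∀ i k, b (i, f k) = w (i, k) := fun i k => by rw [hb _ ⟨k, rfl⟩, hv]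
  let d : A2 → ℝ := fun j => ∑ k : S, if f k = j then p k else 0
  refine ⟨Matrix.of fun a x => b x a, ?_, Matrix.diagonal fun j => (d j : ℂ), ⟨?_, ?_⟩, ?_⟩
  · rw [Matrix.mem_unitaryGroup_iff']
    ext x y
    have := orthonormal_iff_ite.1 b.orthonormal x y
    rw [Matrix.mul_apply, Matrix.one_apply, ← this, PiLp.inner_apply]
    refine Finset.sum_congr rfl fun a _ => ?_
    simp [Matrix.star_apply, mul_comm]
  · rw [Matrix.posSemidef_diagonal_iff]
    intro j
    have : 0 ≤ d j := Finset.sum_nonneg fun k _ => by split_ifs; exacts [hp _, le_rfl]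
    exact_mod_cast this
  · rw [Matrix.trace_diagonal]
    have : ∑ j, d j = 1 := by
      simp only [d]
      rw [Finset.sum_comm]
      simp only [Finset.sum_ite_eq, Finset.mem_univ, if_true]
      rw [← hp1]
      exact hsub p fun k hk => hk
    exact_mod_cast this
  · intro ψ a a'
    have hR : ((Matrix.of fun a x => b x a) * (outer ψ ⊗ₖ Matrix.diagonal fun j => (d j : ℂ)) *
        (Matrix.of fun a x => b x a)ᴴ) a a' =
        ∑ j, (d j : ℂ) * ((∑ i, b (i, j) a * ψ i) * star (∑ i, b (i, j) a' * ψ i)) := by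
      simp only [Matrix.mul_apply, Fintype.sum_prod_type, Matrix.kroneckerMap_apply, outer,
        Matrix.of_apply, Matrix.conjTranspose_apply, Matrix.diagonal_apply, mul_ite, mul_zero,
        Finset.sum_ite_eq', Finset.mem_univ, if_true]
      rw [Finset.sum_comm]
      refine Finset.sum_congr rfl fun j _ => ?_
      rw [star_sum, Finset.mul_sum, Finset.mul_sum]
      refine Finset.sum_congr rfl fun i _ => ?_
      rw [Finset.sum_mul, Finset.sum_mul, Finset.mul_sum]
      refine Finset.sum_congr rfl fun i' _ => ?_
      rw [star_mul']
      ring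
    rw [hR]
    have hL : ∑ k, (∑ i, Y k a i * ψ i) * star (∑ i, Y k a' i * ψ i) =
        ∑ k : S, (∑ i, Y k a i * ψ i) * star (∑ i, Y k a' i * ψ i) := by
      symm
      refine hsub (fun k => (∑ i, Y k a i * ψ i) * star (∑ i, Y k a' i * ψ i)) fun k hk => ?_
      simp [hzero k hk]
    rw [hL]
    have hd : ∀ j (z : ℂ), (d j : ℂ) * z = ∑ k : S, (if f k = j then (p k : ℂ) else 0) * z := by
      intro j z
      simp only [d]
      push_cast
      rw [Finset.sum_mul]
      exact Finset.sum_congr rfl fun k _ => by split_ifs <;> simp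
    rw [Finset.sum_congr rfl fun j _ => hd j _, Finset.sum_comm]
    refine Finset.sum_congr rfl fun k _ => ?_
    rw [Finset.sum_eq_single (f k) (fun j _ hj => by simp [Ne.symm hj]) (by simp)]
    have hsum : ∀ a, ∑ i, b (i, f k) a * ψ i = (∑ i, Y k a i * ψ i) / (Real.sqrt (p k) : ℝ) := by
      intro a
      rw [Finset.sum_div]
      refine Finset.sum_congr rfl fun i _ => ?_
      rw [hbw]
      simp only [w]
      ring
    rw [hsum, hsum, if_pos rfl, star_div₀, ← hsq k]
    have := hsn k
    rw [show star ((Real.sqrt (p k) : ℝ) : ℂ) = (Real.sqrt (p k) : ℝ) from Complex.conj_ofReal _]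
    field_simp

lemma scalar_of_quad {A1 : Type*} [Fintype A1] [DecidableEq A1] (N : Matrix A1 A1 ℂ) (c : ℂ)
    (h : ∀ ψ : EuclideanSpace ℂ A1, ‖ψ‖ = 1 → star (ψ : A1 → ℂ) ⬝ᵥ (N *ᵥ ψ) = c) :
    N = c • 1 := by
  have key : Matrix.toEuclideanLin N = Matrix.toEuclideanLin (c • (1 : Matrix A1 A1 ℂ)) := by
    rw [← ext_inner_map]
    intro x
    rw [← inner_conj_symm, ← inner_conj_symm ((toEuclideanLin (c • (1 : Matrix A1 A1 ℂ))) x)]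
    congr 1
    by_cases hx : x = 0
    · simp [hx]
    have hn : (‖x‖ : ℂ) ≠ 0 := by simpa using hx
    have h1 := h ((‖x‖ : ℂ)⁻¹ • x) (by
      rw [norm_smul]; simp [hx])
    have hself : inner ℂ x x = (‖x‖ : ℂ) ^ 2 := inner_self_eq_norm_sq_to_K x
    have e1 : inner ℂ x (toEuclideanLin N x) = star (x : A1 → ℂ) ⬝ᵥ (N *ᵥ x) := by
      rw [EuclideanSpace.inner_eq_star_dotProduct, dotProduct_comm]; rfl
    have e2 : toEuclideanLin (c • (1 : Matrix A1 A1 ℂ)) x = c • x := by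
      ext i; simp [toEuclideanLin, Matrix.smul_mulVec]
    rw [e1, e2, inner_smul_right, hself, ← h1]
    simp only [WithLp.ofLp_smul, Matrix.mulVec_smul, star_smul, dotProduct_smul, smul_dotProduct,
      smul_eq_mul, star_inv₀]
    rw [show star (‖x‖ : ℂ) = ‖x‖ from Complex.conj_ofReal _]
    field_simp
  exact Matrix.toEuclideanLin.injective key

/-- Data Localisation: let `H_A = H_{A1} ⊗ H_{A2}`, fix unit vectors
`φ ∈ H_{A2}`, `γ ∈ H_B` and a unitary `U` on `H_A ⊗ H_B`.  If the reduced state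
`Tr_A[U(|ψ⟩⟨ψ| ⊗ |φ⟩⟨φ| ⊗ |γ⟩⟨γ|)U†]` on `H_B` is a fixed density operator `ρ_B`,
independent of the unit vector `ψ ∈ H_{A1}`, then there are a unitary `V` on `H_A` and a
density operator `σ` on `H_{A2}`, both independent of `ψ`, with
`Tr_B[U(|ψ⟩⟨ψ| ⊗ |φ⟩⟨φ| ⊗ |γ⟩⟨γ|)U†] = V(|ψ⟩⟨ψ| ⊗ σ)V†` for every unit `ψ`. -/
theorem stmt4 {A1 A2 B : Type*} [Fintype A1] [Fintype A2] [Fintype B]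
    [DecidableEq A1] [DecidableEq A2] [DecidableEq B]
    (φ : EuclideanSpace ℂ A2) (hφ : ‖φ‖ = 1)
    (γ : EuclideanSpace ℂ B) (hγ : ‖γ‖ = 1)
    (U : Matrix ((A1 × A2) × B) ((A1 × A2) × B) ℂ)
    (hU : U ∈ Matrix.unitaryGroup ((A1 × A2) × B) ℂ)
    (ρB : Matrix B B ℂ) (hρB : IsDensity ρB)
    (hsec : ∀ ψ : EuclideanSpace ℂ A1, ‖ψ‖ = 1 →
      trFst (U * outer (tens3 ψ φ γ) * Uᴴ) = ρB) :
    ∃ V : Matrix (A1 × A2) (A1 × A2) ℂ, V ∈ Matrix.unitaryGroup (A1 × A2) ℂ ∧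
      ∃ σ : Matrix A2 A2 ℂ, IsDensity σ ∧
        ∀ ψ : EuclideanSpace ℂ A1, ‖ψ‖ = 1 →
          trSnd (U * outer (tens3 ψ φ γ) * Uᴴ) = V * (outer ψ ⊗ₖ σ) * Vᴴ := by
  by_cases hA : Nonempty A1
  swap
  · refine ⟨1, one_mem _, outer φ, ⟨?_, ?_⟩, ?_⟩
    · exact Matrix.posSemidef_vecMulVec_self_star (φ : A2 → ℂ)
    · have h := EuclideanSpace.norm_sq_eq φ
      rw [hφ] at h
      have : (((1:ℝ)^2 : ℝ) : ℂ) = ∑ i, φ i * star (φ i) := by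
        rw [h]; push_cast
        exact Finset.sum_congr rfl fun i _ => (Complex.mul_conj' _).symm
      simp [Matrix.trace, outer] at this ⊢
      exact this.symm
    · intro ψ hψ
      exfalso
      have : IsEmpty A1 := not_nonempty_iff.1 hA
      have : ψ = 0 := Subsingleton.elim _ _
      simp [this] at hψ
  let X : A1 × A2 → B → A1 → ℂ := fun a b i => ∑ j, ∑ c, U (a, b) ((i, j), c) * φ j * γ c
  have hX : ∀ (ψ : EuclideanSpace ℂ A1) a b a' b',
      (U * outer (tens3 ψ φ γ) * Uᴴ) (a, b) (a', b') =
        (∑ i, X a b i * ψ i) * star (∑ i, X a' b' i * ψ i) := by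
    intro ψ a b a' b'
    have e : ∀ a b, ∑ i, X a b i * ψ i = (U *ᵥ tens3 ψ φ γ) (a, b) := by
      intro a b
      simp only [X, Matrix.mulVec, dotProduct, Fintype.sum_prod_type, tens3, Finset.sum_mul]
      refine Finset.sum_congr rfl fun i _ => Finset.sum_congr rfl fun j _ =>
        Finset.sum_congr rfl fun c _ => ?_
      ring
    rw [e, e]
    have : outer (tens3 ψ φ γ) = vecMulVec (tens3 ψ φ γ) (star (tens3 ψ φ γ)) := rfl
    rw [this, Matrix.mul_vecMulVec, Matrix.vecMulVec_mul, ← Matrix.star_mulVec]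
    rfl
  -- scalar condition
  have hscal : ∀ b b' i i', ∑ a, X a b i * star (X a b' i') = if i = i' then ρB b b' else 0 := by
    intro b b' i i'
    have h := scalar_of_quad (Matrix.of fun i' i => ∑ a, X a b i * star (X a b' i')) (ρB b b') (by
      intro ψ hψ
      rw [← hsec ψ hψ]
      simp only [trFst, Matrix.of_apply, hX, dotProduct, Matrix.mulVec, star_sum, star_mul',
        Pi.star_apply, Finset.sum_mul_sum]
      simp only [Finset.sum_mul, Finset.mul_sum]
      rw [Finset.sum_comm]
      conv_rhs => rw [Finset.sum_comm]
      refine Finset.sum_congr rfl fun i _ => ?_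
      rw [Finset.sum_comm]
      conv_lhs => rw [Finset.sum_comm]
      conv_rhs => rw [Finset.sum_comm]
      conv_rhs => rw [Finset.sum_comm]
      conv_rhs => rw [Finset.sum_comm]
      refine Finset.sum_congr rfl fun i' _ => Finset.sum_congr rfl fun a _ => ?_
      ring)
    have := congrFun (congrFun h i') i
    simpa [Matrix.one_apply, eq_comm] using this
  have hH := hρB.1.isHermitian
  let E : Matrix B B ℂ := hH.eigenvectorUnitary
  have hE1 : Eᴴ * E = 1 := Unitary.coe_star_mul_self hH.eigenvectorUnitary
  have hE2 : E * Eᴴ = 1 := Unitary.coe_mul_star_self hH.eigenvectorUnitary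
  have hD : Eᴴ * ρB * E = Matrix.diagonal (fun k => (hH.eigenvalues k : ℂ)) := by
    have h := hH.spectral_theorem
    rw [Unitary.conjStarAlgAut_apply] at h
    change ρB = E * Matrix.diagonal (fun k => (hH.eigenvalues k : ℂ)) * Eᴴ at h
    conv_lhs => rw [h]
    rw [← Matrix.mul_assoc, ← Matrix.mul_assoc, hE1, Matrix.one_mul, Matrix.mul_assoc, hE1,
      Matrix.mul_one]
  let Y : B → A1 × A2 → A1 → ℂ := fun k a i => ∑ b, star (E b k) * X a b i
  obtain ⟨V, hV, σ, hσ, h⟩ := core_loc (A1 := A1) (A2 := A2) hH.eigenvalues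
    (fun k => hρB.1.eigenvalues_nonneg k) (by
      have := hH.trace_eq_sum_eigenvalues
      rw [hρB.2] at this
      have h2 : ((∑ k, hH.eigenvalues k : ℝ) : ℂ) = 1 := by rw [this]; push_cast; rfl
      exact_mod_cast h2) Y (by
      intro k l i i'
      have e : ∑ a, Y k a i * star (Y l a i') =
          ∑ b, ∑ b', star (E b k) * E b' l * ∑ a, X a b i * star (X a b' i') := by
        simp only [Y, star_sum, star_mul', star_star, Finset.sum_mul_sum]
        rw [Finset.sum_comm]
        refine Finset.sum_congr rfl fun b _ => ?_
        rw [Finset.sum_comm]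
        refine Finset.sum_congr rfl fun b' _ => ?_
        rw [Finset.mul_sum]
        refine Finset.sum_congr rfl fun a _ => ?_
        ring
      rw [e]
      simp only [hscal]
      by_cases hi : i = i'
      · simp only [hi, and_true, if_true]
        have := congrFun (congrFun hD k) l
        rw [Matrix.diagonal_apply] at this
        rw [← this]
        simp only [Matrix.mul_apply, Matrix.conjTranspose_apply, Finset.sum_mul]
        rw [Finset.sum_comm]
        refine Finset.sum_congr rfl fun b _ => Finset.sum_congr rfl fun b' _ => ?_
        ring
      · simp [hi])
  refine ⟨V, hV, σ, hσ, ?_⟩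
  intro ψ _
  ext a a'
  rw [← h ψ a a']
  simp only [trSnd, Matrix.of_apply, hX]
  have e : ∀ k a, ∑ i, Y k a i * ψ i = (Eᴴ *ᵥ fun b => ∑ i, X a b i * ψ i) k := by
    intro k a
    simp only [Y, Matrix.mulVec, dotProduct, Matrix.conjTranspose_apply, Finset.sum_mul,
      Finset.mul_sum]
    rw [Finset.sum_comm]
    simp only [mul_assoc]
  simp only [e]
  have e2 : ∀ x y : B → ℂ, ∑ k, (Eᴴ *ᵥ x) k * star ((Eᴴ *ᵥ y) k) = ∑ b, x b * star (y b) := by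
    intro x y
    change (Eᴴ *ᵥ x) ⬝ᵥ star (Eᴴ *ᵥ y) = x ⬝ᵥ star y
    rw [Matrix.star_mulVec, conjTranspose_conjTranspose, dotProduct_comm,
      ← Matrix.dotProduct_mulVec, Matrix.mulVec_mulVec, hE2, Matrix.one_mulVec, dotProduct_comm]
  rw [e2]

end
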